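/- The two-variable quaternionic Mahler measures of the commutator polynomials satisfy: m_ℍ(xy − yx) = 0, and m_ℍ(xy − yx + 1) = (1/4)·(1 − √5 + 3·log((3 + √5)/2)). -/

import Mathlib

open MeasureTheory Quaternion

noncomputable instance : MeasurableSpace (Quaternion ℝ) := borel _
instance : BorelSpace (Quaternion ℝ) := ⟨rfl⟩
instance : Nonempty (Metric.sphere (0 : Quaternion ℝ) 1) := ⟨⟨1, by simp⟩⟩

/-- The probability Haar measure `μ` on the group `T¹(ℍ)` of unit quaternions
(the Haar measure normalized so that the whole group has measure `1`). -/
noncomputable def muH : Measure (Metric.sphere (0 : Quaternion ℝ) 1) :=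
  Measure.haarMeasure ⊤

/-- The quaternionic Mahler measure `m_ℍ(f) = ∫_{T¹(ℍ)} log |f(q)| dμ(q)`. -/
noncomputable def mahlerH (f : Quaternion ℝ → Quaternion ℝ) : ℝ :=
  ∫ q : Metric.sphere (0 : Quaternion ℝ) 1, Real.log ‖f q‖ ∂muH
/-- The two-variable quaternionic Mahler measure
`m_ℍ(f) = ∫_{T¹(ℍ)×T¹(ℍ)} log |f(x,y)| d(μ⊗μ)(x,y)`. -/
noncomputable def mahlerH2 (f : Quaternion ℝ → Quaternion ℝ → Quaternion ℝ) : ℝ :=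
  ∫ p : (Metric.sphere (0 : Quaternion ℝ) 1) × (Metric.sphere (0 : Quaternion ℝ) 1),
    Real.log ‖f p.1 p.2‖ ∂(muH.prod muH)

/-!
For a nonreal quaternion `x`, the commutator with `x` kills the plane `ℝ[x]` and multiplies norms
on its orthogonal complement by `2 ‖Im x‖`, so `‖xy - yx‖² = 4 ‖Im x‖² ‖p y‖²` with `p` the
projection onto that complement. The squared norm of the projection of a uniform point of a sphere
onto a subspace is Beta distributed; hence `‖xy - yx‖²` has the law of `4st` with
`s ∼ Beta(3/2, 1/2)` and `t` uniform on `(0, 1)` independent, and `‖xy - yx + c‖²` that of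
`c² + 4st` for real `c`. Integrating `log (c² + 4st)` over `t` is elementary, and the substitution
`s = (1 - cos θ)/2` leaves `∫ A log A` over `(0, π)` with `A = c² + 2 - 2 cos θ`. Writing
`c² + 2 = r + r⁻¹` with `0 < r ≤ 1` gives `A = |1 - r e^{iθ}|² / r`, whose entropy integral is a
mean value of a harmonic function.
-/

open Set Metric
open scoped Real
open Module (finrank)
open ProbabilityTheory (betaMeasure beta)

/-! ### Polar coordinates in the squared radius -/

section Sphere

theorem lintegral_Ioi_comp_sq (f : ℝ → ENNReal) :
    ∫⁻ r in Ioi (0 : ℝ), ENNReal.ofReal (2 * r) * f (r ^ 2) = ∫⁻ t in Ioi (0 : ℝ), f t := by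
  have image_sq : (fun r : ℝ => r ^ 2) '' Ioi 0 = Ioi 0 :=
    Subset.antisymm (image_subset_iff.2 fun r hr => pow_pos (mem_Ioi.1 hr) 2)
      fun t ht => ⟨√t, Real.sqrt_pos.2 ht, Real.sq_sqrt (le_of_lt ht)⟩
  nth_rw 2 [← image_sq]
  rw [lintegral_image_eq_lintegral_abs_deriv_mul measurableSet_Ioi
    (fun r _ => by simpa using (hasDerivAt_pow 2 r).hasDerivWithinAt)
    fun a ha b hb h => (sq_eq_sq₀ (le_of_lt ha) (le_of_lt hb)).1 h]
  refine setLIntegral_congr_fun measurableSet_Ioi fun r (hr : 0 < r) => ?_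
  simp [abs_of_pos hr]

variable {E : Type*} [NormedAddCommGroup E] [MeasurableSpace E] [BorelSpace E]

theorem lintegral_eq_lintegral_toSphere [NormedSpace ℝ E] [FiniteDimensional ℝ E]
    [Nontrivial E] (μ : Measure E) [μ.IsAddHaarMeasure] {f : E → ENNReal} (hf : Measurable f) :
    ∫⁻ x, f x ∂μ = ∫⁻ y : sphere (0 : E) 1, (∫⁻ r in Ioi (0 : ℝ),
      ENNReal.ofReal (r ^ (finrank ℝ E - 1)) * f (r • (y : E))) ∂μ.toSphere := by
  calc
    ∫⁻ x, f x ∂μ = ∫⁻ x : ({0}ᶜ : Set E), f x ∂(μ.comap (↑)) := by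
      rw [lintegral_subtype_comap (by measurability), restrict_compl_singleton]
    _ = ∫⁻ p, f ((p.2 : ℝ) • (p.1 : E)) ∂μ.toSphere.prod (.volumeIoiPow (finrank ℝ E - 1)) := by
      rw [← μ.measurePreserving_homeomorphUnitSphereProd.lintegral_comp (by fun_prop)]
      refine lintegral_congr fun x => ?_
      rw [← homeomorphUnitSphereProd_symm_apply_coe, Homeomorph.symm_apply_apply]
    _ = ∫⁻ y, (∫⁻ r, f ((r : ℝ) • (y : E)) ∂.volumeIoiPow (finrank ℝ E - 1)) ∂μ.toSphere :=
      lintegral_prod _ (by fun_prop)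
    _ = _ := by
      refine lintegral_congr fun y => ?_
      rw [Measure.volumeIoiPow,
        lintegral_withDensity_eq_lintegral_mul _ (by fun_prop) (by fun_prop)]
      exact lintegral_subtype_comap measurableSet_Ioi
        fun r : ℝ => ENNReal.ofReal (r ^ (finrank ℝ E - 1)) * f (r • (y : E))

theorem two_mul_lintegral_comp_norm_sq_mul [NormedSpace ℝ E] [FiniteDimensional ℝ E]
    [Nontrivial E] (μ : Measure E) [μ.IsAddHaarMeasure] {φ : ℝ → ENNReal} {h : E → ENNReal}
    (hφ : Measurable φ) (hh : Measurable h) (h_smul : ∀ r : ℝ, 0 < r → ∀ x, h (r • x) = h x) :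
    2 * ∫⁻ x, φ (‖x‖ ^ 2) * h x ∂μ =
      (∫⁻ t in Ioi (0 : ℝ), ENNReal.ofReal (t ^ (finrank ℝ E / 2 - 1 : ℝ)) * φ t) *
        ∫⁻ y : sphere (0 : E) 1, h y ∂μ.toSphere := by
  have density {r : ℝ} (hr : 0 < r) : 2 * ENNReal.ofReal (r ^ (finrank ℝ E - 1)) =
      ENNReal.ofReal (2 * r) * ENNReal.ofReal ((r ^ 2) ^ (finrank ℝ E / 2 - 1 : ℝ)) := by
    have : r ^ (finrank ℝ E - 1) = r * (r ^ 2) ^ (finrank ℝ E / 2 - 1 : ℝ) := by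
      nth_rw 2 [← Real.rpow_one r]
      rw [← Real.rpow_natCast, Nat.cast_pred Module.finrank_pos, ← Real.rpow_two,
        ← Real.rpow_mul hr.le, ← Real.rpow_add hr]
      ring_nf
    rw [this, ← ENNReal.ofReal_mul (by positivity), mul_assoc, ENNReal.ofReal_mul zero_le_two,
      ENNReal.ofReal_ofNat]
  rw [lintegral_eq_lintegral_toSphere μ (by fun_prop), ← lintegral_Ioi_comp_sq,
    ← lintegral_const_mul _ (by fun_prop), ← lintegral_const_mul _ (by fun_prop)]
  refine lintegral_congr fun y => ?_
  rw [← lintegral_const_mul _ (by fun_prop), ← lintegral_mul_const _ (by fun_prop)]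
  refine setLIntegral_congr_fun measurableSet_Ioi fun r (hr : 0 < r) => ?_
  simp only [h_smul r hr, norm_smul, Real.norm_of_nonneg hr.le, norm_eq_of_mem_sphere, mul_one]
  rw [← mul_assoc, density hr]
  ring

theorem two_mul_lintegral_comp_norm_sq [NormedSpace ℝ E] [FiniteDimensional ℝ E]
    [Nontrivial E] (μ : Measure E) [μ.IsAddHaarMeasure] {φ : ℝ → ENNReal} (hφ : Measurable φ) :
    2 * ∫⁻ x, φ (‖x‖ ^ 2) ∂μ =
      (∫⁻ t in Ioi (0 : ℝ), ENNReal.ofReal (t ^ (finrank ℝ E / 2 - 1 : ℝ)) * φ t) *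
        μ.toSphere univ := by
  simpa using two_mul_lintegral_comp_norm_sq_mul μ hφ (h := 1) (by fun_prop) fun _ _ _ => rfl

end Sphere

/-! ### Beta integrals -/

theorem lintegral_rpow_mul_exp_neg {p : ℝ} (hp : 0 < p) :
    ∫⁻ t in Ioi (0 : ℝ), ENNReal.ofReal (t ^ (p - 1)) * ENNReal.ofReal (Real.exp (-t)) =
      ENNReal.ofReal (Real.Gamma p) := by
  rw [Real.Gamma_eq_integral hp, ofReal_integral_eq_lintegral_ofReal
    (Real.GammaIntegral_convergent hp)]
  · refine setLIntegral_congr_fun measurableSet_Ioi fun t (ht : 0 < t) => ?_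
    rw [← ENNReal.ofReal_mul (by positivity), mul_comm]
  · filter_upwards [ae_restrict_mem measurableSet_Ioi] with t (ht : 0 < t)
    positivity

theorem lintegral_Ioi_lintegral_Ioi_comp_add {F : ℝ → ℝ → ENNReal}
    (hF : Measurable (Function.uncurry F)) :
    ∫⁻ s in Ioi (0 : ℝ), ∫⁻ t in Ioi (0 : ℝ), F s (s + t) =
      ∫⁻ u in Ioi (0 : ℝ), ∫⁻ s in Ioo 0 u, F s u := by
  have shift (s : ℝ) : ∫⁻ t in Ioi (0 : ℝ), F s (s + t) = ∫⁻ u in Ioi s, F s u := by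
    simpa [preimage_const_add_Ioi] using
      (measurePreserving_add_left volume s).setLIntegral_comp_preimage_emb
        (measurableEmbedding_addLeft s) (F s) (Ioi s)
  calc
    _ = ∫⁻ s in Ioi (0 : ℝ), ∫⁻ u in Ioi s, F s u := lintegral_congr shift
    _ = ∫⁻ s in Ioi (0 : ℝ), ∫⁻ u in Ioi (0 : ℝ), (Ioi s).indicator (F s) u := by
      refine setLIntegral_congr_fun measurableSet_Ioi fun s (hs : 0 < s) => ?_
      simp [lintegral_indicator, Measure.restrict_restrict, Ioi_inter_Ioi, hs.le]
    _ = ∫⁻ u in Ioi (0 : ℝ), ∫⁻ s in Ioi (0 : ℝ), (Iio u).indicator (F · u) s :=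
      lintegral_lintegral_swap (Measurable.aemeasurable <|
        hF.indicator (measurableSet_lt measurable_fst measurable_snd))
    _ = ∫⁻ u in Ioi (0 : ℝ), ∫⁻ s in Ioo 0 u, F s u := by
      simp [lintegral_indicator, Measure.restrict_restrict, Iio_inter_Ioi]

theorem lintegral_Ioo_rpow_mul_sub_rpow {u : ℝ} (hu : 0 < u) (p q : ℝ) {g : ℝ → ENNReal}
    (hg : Measurable g) :
    ∫⁻ s in Ioo 0 u, ENNReal.ofReal (s ^ (p - 1) * (u - s) ^ (q - 1)) * g (s / u) =
      ENNReal.ofReal (u ^ (p + q - 1)) *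
        ∫⁻ τ in Ioo (0 : ℝ) 1, ENNReal.ofReal (τ ^ (p - 1) * (1 - τ) ^ (q - 1)) * g τ := by
  have image_mul : (u * ·) '' Ioo 0 1 = Ioo 0 u := by simp [image_mul_left_Ioo hu]
  have density {τ : ℝ} (hτ : τ ∈ Ioo (0 : ℝ) 1) :
      u * ((u * τ) ^ (p - 1) * (u - u * τ) ^ (q - 1)) =
        u ^ (p + q - 1) * (τ ^ (p - 1) * (1 - τ) ^ (q - 1)) := by
    rw [← mul_one_sub, Real.mul_rpow hu.le hτ.1.le, Real.mul_rpow hu.le (sub_nonneg.2 hτ.2.le),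
      show p + q - 1 = 1 + (p - 1) + (q - 1) by ring, Real.rpow_add hu, Real.rpow_add hu,
      Real.rpow_one]
    ring
  rw [← image_mul, lintegral_image_eq_lintegral_abs_deriv_mul measurableSet_Ioo
    (fun τ _ => ((hasDerivAt_id' τ).const_mul u).hasDerivWithinAt)
    (mul_right_injective₀ hu.ne').injOn, ← lintegral_const_mul _ (by fun_prop)]
  refine setLIntegral_congr_fun measurableSet_Ioo fun τ hτ => ?_
  simp only [mul_one, abs_of_pos hu, mul_div_cancel_left₀ _ hu.ne']
  rw [← mul_assoc, ← ENNReal.ofReal_mul hu.le, density hτ, ENNReal.ofReal_mul (by positivity),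
    mul_assoc]

theorem lintegral_Ioi_lintegral_Ioi_rpow_mul_rpow (p q : ℝ) {φ g : ℝ → ENNReal}
    (hφ : Measurable φ) (hg : Measurable g) :
    ∫⁻ s in Ioi (0 : ℝ), ∫⁻ t in Ioi (0 : ℝ),
        ENNReal.ofReal (s ^ (p - 1) * t ^ (q - 1)) * (φ (s + t) * g (s / (s + t))) =
      (∫⁻ u in Ioi (0 : ℝ), ENNReal.ofReal (u ^ (p + q - 1)) * φ u) *
        ∫⁻ τ in Ioo (0 : ℝ) 1, ENNReal.ofReal (τ ^ (p - 1) * (1 - τ) ^ (q - 1)) * g τ := by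
  have key := lintegral_Ioi_lintegral_Ioi_comp_add
    (F := fun s u => ENNReal.ofReal (s ^ (p - 1) * (u - s) ^ (q - 1)) * (φ u * g (s / u)))
    (by unfold Function.uncurry; fun_prop)
  simp only [add_sub_cancel_left] at key
  rw [key, ← lintegral_mul_const _ (by fun_prop)]
  refine setLIntegral_congr_fun measurableSet_Ioi fun u hu => ?_
  simp only [mul_left_comm _ (φ u)]
  rw [lintegral_const_mul _ (by fun_prop), lintegral_Ioo_rpow_mul_sub_rpow hu p q hg]
  ring

theorem betaMeasure_eq_withDensity_restrict (p q : ℝ) :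
    betaMeasure p q = (volume.restrict (Ioo 0 1)).withDensity fun τ =>
      ENNReal.ofReal ((beta p q)⁻¹ * (τ ^ (p - 1) * (1 - τ) ^ (q - 1))) := by
  rw [← withDensity_indicator measurableSet_Ioo, betaMeasure]
  congr 1
  ext τ
  simp [ProbabilityTheory.betaPDF_eq, indicator_apply, apply_ite ENNReal.ofReal, mul_assoc]

theorem lintegral_Ioo_rpow_mul_one_sub_rpow {p q : ℝ} (hp : 0 < p) (hq : 0 < q)
    {g : ℝ → ENNReal} (hg : Measurable g) :
    ∫⁻ τ in Ioo (0 : ℝ) 1, ENNReal.ofReal (τ ^ (p - 1) * (1 - τ) ^ (q - 1)) * g τ =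
      ENNReal.ofReal (beta p q) * ∫⁻ τ, g τ ∂betaMeasure p q := by
  have hbeta := ProbabilityTheory.beta_pos hp hq
  rw [betaMeasure_eq_withDensity_restrict,
    lintegral_withDensity_eq_lintegral_mul _ (by fun_prop) hg,
    ← lintegral_const_mul _ (by fun_prop)]
  refine lintegral_congr fun τ => ?_
  rw [Pi.mul_apply, ← mul_assoc, ← ENNReal.ofReal_mul hbeta.le, mul_inv_cancel_left₀ hbeta.ne']

/-! ### Projections of a uniform point of the sphere -/

section Decomposition

variable {E F G : Type*}
  [NormedAddCommGroup E] [InnerProductSpace ℝ E] [FiniteDimensional ℝ E]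
  [MeasurableSpace E] [BorelSpace E]
  [NormedAddCommGroup F] [InnerProductSpace ℝ F] [FiniteDimensional ℝ F] [Nontrivial F]
  [NormedAddCommGroup G] [InnerProductSpace ℝ G] [FiniteDimensional ℝ G] [Nontrivial G]

theorem four_mul_lintegral_comp_norm_sq_fst_snd [MeasurableSpace F] [BorelSpace F]
    [MeasurableSpace G] [BorelSpace G] (e : E ≃ₗᵢ[ℝ] WithLp 2 (F × G)) {Φ : ℝ → ℝ → ENNReal}
    (hΦ : Measurable (Function.uncurry Φ)) :
    4 * ∫⁻ x, Φ (‖(e x).fst‖ ^ 2) (‖(e x).snd‖ ^ 2) =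
      (∫⁻ s in Ioi (0 : ℝ), ∫⁻ t in Ioi (0 : ℝ), ENNReal.ofReal
        (s ^ (finrank ℝ F / 2 - 1 : ℝ) * t ^ (finrank ℝ G / 2 - 1 : ℝ)) * Φ s t) *
      ((volume : Measure F).toSphere univ * (volume : Measure G).toSphere univ) := by
  have he : MeasurePreserving fun x => WithLp.ofLp (e x) :=
    (WithLp.volume_preserving_ofLp F G).comp e.measurePreserving
  have hΦ' : Measurable fun z : F × G => Φ (‖z.1‖ ^ 2) (‖z.2‖ ^ 2) :=
    hΦ.comp (f := fun z : F × G => (‖z.1‖ ^ 2, ‖z.2‖ ^ 2)) (by fun_prop)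
  have hG : Measurable fun s => ∫⁻ t in Ioi (0 : ℝ),
      ENNReal.ofReal (t ^ (finrank ℝ G / 2 - 1 : ℝ)) * Φ s t :=
    Measurable.lintegral_prod_right' (f := fun z : ℝ × ℝ =>
      ENNReal.ofReal (z.2 ^ (finrank ℝ G / 2 - 1 : ℝ)) * Φ z.1 z.2) (by fun_prop)
  calc
    _ = 4 * ∫⁻ z : F × G, Φ (‖z.1‖ ^ 2) (‖z.2‖ ^ 2) :=
      congrArg (4 * ·) (he.lintegral_comp hΦ')
    _ = 2 * ∫⁻ a : F, 2 * ∫⁻ b : G, Φ (‖a‖ ^ 2) (‖b‖ ^ 2) := by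
      rw [Measure.volume_eq_prod, lintegral_prod _ hΦ'.aemeasurable,
        lintegral_const_mul _ hΦ'.lintegral_prod_right', ← mul_assoc]
      norm_num
    _ = 2 * (∫⁻ a : F, ∫⁻ t in Ioi (0 : ℝ), ENNReal.ofReal (t ^ (finrank ℝ G / 2 - 1 : ℝ)) *
          Φ (‖a‖ ^ 2) t) * (volume : Measure G).toSphere univ := by
      simp_rw [two_mul_lintegral_comp_norm_sq volume hΦ.of_uncurry_left]
      rw [lintegral_mul_const' _ _ (measure_ne_top _ _), mul_assoc]
    _ = _ := by
      rw [two_mul_lintegral_comp_norm_sq volume hG, mul_assoc]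
      congr 1
      refine setLIntegral_congr_fun measurableSet_Ioi fun s (hs : 0 < s) => ?_
      rw [← lintegral_const_mul _ (by fun_prop)]
      simp only [← mul_assoc, ENNReal.ofReal_mul (Real.rpow_nonneg hs.le _)]

theorem two_mul_lintegral_toSphere_comp_norm_sq_fst [MeasurableSpace F] [BorelSpace F]
    [MeasurableSpace G] [BorelSpace G] (e : E ≃ₗᵢ[ℝ] WithLp 2 (F × G)) {g : ℝ → ENNReal}
    (hg : Measurable g) :
    2 * ∫⁻ y : sphere (0 : E) 1, g (‖(e y).fst‖ ^ 2) ∂(volume : Measure E).toSphere =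
      ENNReal.ofReal (beta (finrank ℝ F / 2) (finrank ℝ G / 2)) *
        (∫⁻ τ, g τ ∂betaMeasure (finrank ℝ F / 2) (finrank ℝ G / 2)) *
        ((volume : Measure F).toSphere univ * (volume : Measure G).toSphere univ) := by
  have hF : (0 : ℝ) < finrank ℝ F / 2 := by simp [Module.finrank_pos]
  have hG : (0 : ℝ) < finrank ℝ G / 2 := by simp [Module.finrank_pos]
  have hE : (finrank ℝ E / 2 : ℝ) = finrank ℝ F / 2 + finrank ℝ G / 2 := by
    rw [e.toLinearEquiv.finrank_eq, (WithLp.linearEquiv 2 ℝ (F × G)).finrank_eq,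
      Module.finrank_prod, Nat.cast_add, add_div]
  have hE_pos : (0 : ℝ) < finrank ℝ E / 2 := hE ▸ add_pos hF hG
  have : Nontrivial E := Module.nontrivial_of_finrank_pos (R := ℝ) (by simpa using hE_pos)
  -- `exp (-‖x‖ ^ 2)` splits both along the radius and along the two summands.
  set φ : ℝ → ENNReal := fun t => ENNReal.ofReal (Real.exp (-t))
  have hφ : Measurable φ := by fun_prop
  have polar := two_mul_lintegral_comp_norm_sq_mul (volume : Measure E) hφ
    (h := fun x => g (‖(e x).fst‖ ^ 2 / ‖x‖ ^ 2)) (by fun_prop) fun r hr x => by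
      simp [norm_smul, mul_pow, mul_div_mul_left, hr.ne']
  have split := four_mul_lintegral_comp_norm_sq_fst_snd e
    (Φ := fun s t => φ (s + t) * g (s / (s + t))) (by unfold Function.uncurry; fun_prop)
  simp only [← WithLp.prod_norm_sq_eq_of_L2, e.norm_map] at split
  rw [lintegral_Ioi_lintegral_Ioi_rpow_mul_rpow _ _ hφ hg, ← hE,
    lintegral_Ioo_rpow_mul_one_sub_rpow hF hG hg] at split
  simp only [norm_eq_of_mem_sphere, one_pow, div_one] at polar
  rw [lintegral_rpow_mul_exp_neg hE_pos] at polar split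
  rw [← ENNReal.mul_right_inj (ENNReal.ofReal_pos.2 (Real.Gamma_pos_of_pos hE_pos)).ne'
    ENNReal.ofReal_ne_top, mul_left_comm, ← polar, ← mul_assoc (ENNReal.ofReal _), ← split,
    ← mul_assoc]
  norm_num

theorem map_norm_sq_fst_toSphere (e : E ≃ₗᵢ[ℝ] WithLp 2 (F × G)) :
    (volume : Measure E).toSphere.map (fun y : sphere (0 : E) 1 => ‖(e y).fst‖ ^ 2) =
      (volume : Measure E).toSphere univ • betaMeasure (finrank ℝ F / 2) (finrank ℝ G / 2) := by
  borelize F G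
  have hF : (0 : ℝ) < finrank ℝ F / 2 := by simp [Module.finrank_pos]
  have hG : (0 : ℝ) < finrank ℝ G / 2 := by simp [Module.finrank_pos]
  have := ProbabilityTheory.isProbabilityMeasureBeta hF hG
  have law (g : ℝ → ENNReal) (hg : Measurable g) :=
    two_mul_lintegral_toSphere_comp_norm_sq_fst e hg
  have mass := law 1 measurable_one
  simp only [Pi.one_apply, lintegral_one, measure_univ, mul_one] at mass
  refine Measure.ext_of_lintegral _ fun g hg => ?_
  rw [lintegral_map hg (by fun_prop), lintegral_smul_measure, smul_eq_mul,
    ← ENNReal.mul_right_inj two_ne_zero ENNReal.ofNat_ne_top, ← mul_assoc, mass, law g hg]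
  ring

end Decomposition

section Haar

open scoped Pointwise

variable {E : Type*} [NormedAddCommGroup E] [InnerProductSpace ℝ E] [FiniteDimensional ℝ E]
  [MeasurableSpace E] [BorelSpace E]

theorem map_norm_sq_starProjection_toSphere (K : Submodule ℝ E) [Nontrivial K]
    [Nontrivial Kᗮ] :
    (volume : Measure E).toSphere.map
        (fun y : sphere (0 : E) 1 => ‖K.starProjection (y : E)‖ ^ 2) =
      (volume : Measure E).toSphere univ • betaMeasure (finrank ℝ K / 2) (finrank ℝ Kᗮ / 2) := by
  simpa using map_norm_sq_fst_toSphere K.orthogonalDecomposition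

theorem map_toSphere_linearIsometryEquiv (L : E ≃ₗᵢ[ℝ] E) {f : sphere (0 : E) 1 → sphere (0 : E) 1}
    (hf : ∀ y, (f y : E) = L y) :
    (volume : Measure E).toSphere.map f = (volume : Measure E).toSphere := by
  have hf_cont : Continuous f := by
    refine continuous_induced_rng.2 ((L.continuous.comp continuous_subtype_val).congr fun y => ?_)
    exact (hf y).symm
  have hf_surj : Function.Surjective f := fun y =>
    ⟨⟨L.symm y, by simp⟩, Subtype.ext <| by simp [hf]⟩
  refine Measure.ext fun s hs => ?_
  have image_cone : L '' (Ioo (0 : ℝ) 1 • (Subtype.val '' (f ⁻¹' s))) =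
      Ioo (0 : ℝ) 1 • (Subtype.val '' s) := by
    rw [← image2_smul, image_image2_distrib_right L.map_smul, image2_smul, image_image]
    simp only [← hf]
    rw [← image_image, image_preimage_eq _ hf_surj]
  rw [Measure.map_apply hf_cont.measurable hs, Measure.toSphere_apply' _ hs,
    Measure.toSphere_apply' _ (hf_cont.measurable hs), ← image_cone,
    ← L.measurePreserving.measure_preimage_emb L.toHomeomorph.measurableEmbedding (L '' _),
    preimage_image_eq _ L.injective]

end Haar

instance : (volume : Measure ℍ[ℝ]).toSphere.IsMulLeftInvariant where
  map_mul_left_eq_self q := by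
    let mulLeft : ℍ[ℝ] →ₗᵢ[ℝ] ℍ[ℝ] :=
      { toLinearMap := LinearMap.mulLeft ℝ (q : ℍ[ℝ])
        norm_map' := fun x => by simp }
    exact map_toSphere_linearIsometryEquiv (mulLeft.toLinearIsometryEquiv rfl) fun y => rfl

instance : IsProbabilityMeasure muH := ⟨Measure.haarMeasure_self⟩

theorem muH_eq_smul_toSphere :
    muH = ((volume : Measure ℍ[ℝ]).toSphere univ)⁻¹ • (volume : Measure ℍ[ℝ]).toSphere := by
  have uniqueness : _ = _ • muH := Measure.haarMeasure_unique (volume : Measure ℍ[ℝ]).toSphere ⊤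
  have mass_ne_zero := Measure.measure_univ_ne_zero.2 (volume : Measure ℍ[ℝ]).toSphere_ne_zero
  nth_rw 2 [uniqueness]
  rw [smul_smul, TopologicalSpace.PositiveCompacts.coe_top,
    ENNReal.inv_mul_cancel mass_ne_zero (measure_ne_top _ _), one_smul]

theorem map_norm_sq_starProjection_muH (K : Submodule ℝ ℍ[ℝ]) [Nontrivial K]
    [Nontrivial Kᗮ] :
    muH.map (fun y : sphere (0 : ℍ[ℝ]) 1 => ‖K.starProjection (y : ℍ[ℝ])‖ ^ 2) =
      betaMeasure (finrank ℝ K / 2) (finrank ℝ Kᗮ / 2) := by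
  have mass_ne_zero := Measure.measure_univ_ne_zero.2 (volume : Measure ℍ[ℝ]).toSphere_ne_zero
  rw [muH_eq_smul_toSphere, Measure.map_smul, map_norm_sq_starProjection_toSphere,
    smul_smul, ENNReal.inv_mul_cancel mass_ne_zero (measure_ne_top _ _), one_smul]

/-! ### Quaternionic commutators -/

theorem inner_one_eq_re (q : ℍ[ℝ]) : inner ℝ 1 q = q.re := by
  simp [Quaternion.inner_def]

theorem norm_sq_add_real_of_re_eq_zero (c : ℝ) {q : ℍ[ℝ]} (hq : q.re = 0) :
    ‖q + c‖ ^ 2 = c ^ 2 + ‖q‖ ^ 2 := by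
  simp only [sq, ← Quaternion.normSq_eq_norm_mul_self, Quaternion.normSq_def', Quaternion.re_add,
    Quaternion.imI_add, Quaternion.imJ_add, Quaternion.imK_add, Quaternion.re_coe,
    Quaternion.imI_coe, Quaternion.imJ_coe, Quaternion.imK_coe, hq]
  ring

theorem mul_eq_neg_mul_of_inner_eq_zero {u w : ℍ[ℝ]} (hu : u.re = 0) (hw : w.re = 0)
    (huw : inner ℝ u w = 0) : u * w = -(w * u) := by
  simp only [Quaternion.inner_def, Quaternion.re_mul, Quaternion.re_star, Quaternion.imI_star,
    Quaternion.imJ_star, Quaternion.imK_star, hu, hw] at huw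
  ext <;> simp [hu, hw] <;> linarith

theorem exists_unit_imaginary_im_eq_smul (x : ℍ[ℝ]) :
    ∃ u : ℍ[ℝ], u.re = 0 ∧ ‖u‖ = 1 ∧ x.im = ‖x.im‖ • u := by
  rcases eq_or_ne x.im 0 with hx | hx
  · refine ⟨Complex.I, by simp, ?_, by simp [hx]⟩
    rw [← sq_eq_sq₀ (norm_nonneg _) zero_le_one, sq, ← Quaternion.normSq_eq_norm_mul_self]
    simp [Quaternion.normSq_def']
  · refine ⟨‖x.im‖⁻¹ • x.im, by simp, ?_, ?_⟩
    · simp [norm_smul, hx]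
    · rw [smul_inv_smul₀ (norm_ne_zero_iff.2 hx)]

theorem norm_commutator_eq_of_unit_imaginary {u : ℍ[ℝ]} (hu : u.re = 0) (hu1 : ‖u‖ = 1)
    (y : ℍ[ℝ]) :
    ‖u * y - y * u‖ = 2 * ‖(Submodule.span ℝ {1, u})ᗮ.starProjection y‖ := by
  set V := Submodule.span ℝ {1, u}
  set p := V.starProjection y
  set w := Vᗮ.starProjection y
  have hy : p + w = y := V.starProjection_add_starProjection_orthogonal y
  have commute : u * p = p * u := by
    obtain ⟨a, b, hp⟩ := Submodule.mem_span_pair.1 (V.starProjection_apply_mem y)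
    simp only [p, ← hp, mul_add, add_mul, mul_smul_comm, smul_mul_assoc, one_mul, mul_one]
  have anticommute : u * w = -(w * u) := by
    have hw := (Submodule.mem_orthogonal _ _).1 (Vᗮ.starProjection_apply_mem y)
    refine mul_eq_neg_mul_of_inner_eq_zero hu ?_ (hw u (Submodule.subset_span (by simp)))
    rw [← inner_one_eq_re]
    exact hw 1 (Submodule.subset_span (by simp))
  have : u * y - y * u = (2 : ℝ) • (u * w) := by
    rw [← hy, mul_add, add_mul, commute, anticommute, two_smul]
    abel_nf
  rw [this, norm_smul, norm_mul, hu1, one_mul, Real.norm_ofNat]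

theorem finrank_span_one_unit_imaginary {u : ℍ[ℝ]} (hu : u.re = 0) (hu1 : ‖u‖ = 1) :
    finrank ℝ (Submodule.span ℝ {1, u}) = 2 := by
  have orthonormal : Orthonormal ℝ ![1, u] := by
    simp [orthonormal_vecCons_iff, inner_one_eq_re, hu, hu1]
  rw [← Matrix.range_cons_cons_empty 1 u ![], finrank_span_eq_card orthonormal.linearIndependent,
    Fintype.card_fin]

theorem exists_submodule_norm_sq_commutator (x : ℍ[ℝ]) :
    ∃ K : Submodule ℝ ℍ[ℝ], finrank ℝ K = 2 ∧ finrank ℝ Kᗮ = 2 ∧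
      ∀ y, ‖x * y - y * x‖ ^ 2 = 4 * ‖x.im‖ ^ 2 * ‖K.starProjection y‖ ^ 2 := by
  obtain ⟨u, hu, hu1, hx⟩ := exists_unit_imaginary_im_eq_smul x
  set V := Submodule.span ℝ {1, u}
  have hV : finrank ℝ V = 2 := finrank_span_one_unit_imaginary hu hu1
  have hdim := V.finrank_add_finrank_orthogonal
  rw [Quaternion.finrank_eq_four, hV] at hdim
  refine ⟨Vᗮ, by omega, by rwa [V.orthogonal_orthogonal], fun y => ?_⟩
  have : x * y - y * x = ‖x.im‖ • (u * y - y * u) := by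
    rw [smul_sub, ← smul_mul_assoc, ← mul_smul_comm, ← hx]
    ext <;> simp <;> ring
  rw [this, norm_smul, norm_norm, norm_commutator_eq_of_unit_imaginary hu hu1]
  ring

theorem map_norm_sq_im_muH :
    muH.map (fun x : sphere (0 : ℍ[ℝ]) 1 => ‖(x : ℍ[ℝ]).im‖ ^ 2) =
      betaMeasure (3 / 2) (1 / 2) := by
  set K : Submodule ℝ ℍ[ℝ] := (ℝ ∙ (1 : ℍ[ℝ]))ᗮ
  have hK' : finrank ℝ Kᗮ = 1 := by
    rw [Submodule.orthogonal_orthogonal, finrank_span_singleton one_ne_zero]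
  have hK : finrank ℝ K = 3 := by
    have := K.finrank_add_finrank_orthogonal
    rw [Quaternion.finrank_eq_four] at this
    omega
  have : Nontrivial K := Module.nontrivial_of_finrank_pos (R := ℝ) (by omega)
  have : Nontrivial Kᗮ := Module.nontrivial_of_finrank_pos (R := ℝ) (by omega)
  have im_eq (x : ℍ[ℝ]) : x.im = K.starProjection x := by
    rw [Submodule.starProjection_orthogonal', sub_apply,
      Submodule.starProjection_unit_singleton ℝ norm_one, inner_one_eq_re]
    ext <;> simp
  simpa [im_eq, hK, hK'] using map_norm_sq_starProjection_muH K

theorem map_norm_sq_commutator_muH (x : ℍ[ℝ]) :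
    muH.map (fun y : sphere (0 : ℍ[ℝ]) 1 => ‖x * y - y * x‖ ^ 2) =
      (betaMeasure 1 1).map fun τ => 4 * ‖x.im‖ ^ 2 * τ := by
  obtain ⟨K, hK, hK', h⟩ := exists_submodule_norm_sq_commutator x
  have : Nontrivial K := Module.nontrivial_of_finrank_pos (R := ℝ) (by omega)
  have : Nontrivial Kᗮ := Module.nontrivial_of_finrank_pos (R := ℝ) (by omega)
  have law := map_norm_sq_starProjection_muH K
  norm_num [hK, hK'] at law
  rw [← law, Measure.map_map (by fun_prop) (by fun_prop)]
  simp only [Function.comp_def, h]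

instance : IsProbabilityMeasure (betaMeasure 1 1) :=
  ProbabilityTheory.isProbabilityMeasureBeta one_pos one_pos

instance : IsProbabilityMeasure (betaMeasure (3 / 2) (1 / 2)) :=
  ProbabilityTheory.isProbabilityMeasureBeta (by norm_num) (by norm_num)

theorem map_norm_sq_commutator_muH_prod :
    (muH.prod muH).map (fun p => ‖(p.1 * p.2 - p.2 * p.1 : ℍ[ℝ])‖ ^ 2) =
      ((betaMeasure (3 / 2) (1 / 2)).prod (betaMeasure 1 1)).map fun z => 4 * z.1 * z.2 := by
  have him : Measurable fun x : sphere (0 : ℍ[ℝ]) 1 => ‖(x : ℍ[ℝ]).im‖ ^ 2 :=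
    (Quaternion.continuous_im.comp continuous_subtype_val).norm.pow 2 |>.measurable
  refine Measure.ext_of_lintegral _ fun g hg => ?_
  calc
    _ = ∫⁻ x, (∫⁻ y, g (‖(x * y - y * x : ℍ[ℝ])‖ ^ 2) ∂muH) ∂muH := by
      rw [lintegral_map hg (by fun_prop), lintegral_prod _ (by fun_prop)]
    _ = ∫⁻ x : sphere (0 : ℍ[ℝ]) 1,
          (∫⁻ τ, g (4 * ‖(x : ℍ[ℝ]).im‖ ^ 2 * τ) ∂betaMeasure 1 1) ∂muH := by
      refine lintegral_congr fun x => ?_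
      rw [← lintegral_map hg (by fun_prop), map_norm_sq_commutator_muH,
        lintegral_map hg (by fun_prop)]
    _ = ∫⁻ s, (∫⁻ τ, g (4 * s * τ) ∂betaMeasure 1 1) ∂betaMeasure (3 / 2) (1 / 2) := by
      rw [← map_norm_sq_im_muH, lintegral_map (by fun_prop) him]
    _ = _ := by
      rw [lintegral_map hg (by fun_prop), lintegral_prod _ (by fun_prop)]

/-! ### Logarithmic integrals against the two beta measures -/

theorem betaMeasure_one_one : betaMeasure 1 1 = volume.restrict (Ioo 0 1) := by
  simp [betaMeasure_eq_withDensity_restrict, beta, one_add_one_eq_two]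

theorem beta_three_halves_one_half : beta (3 / 2) (1 / 2) = π / 2 := by
  have : Real.Gamma (3 / 2) = √π / 2 := by
    rw [show (3 / 2 : ℝ) = 1 / 2 + 1 by norm_num, Real.Gamma_add_one (by norm_num),
      Real.Gamma_one_half_eq]
    ring
  rw [beta, this, Real.Gamma_one_half_eq, show (3 / 2 + 1 / 2 : ℝ) = 2 by norm_num,
    Real.Gamma_two, div_one, div_mul_eq_mul_div, Real.mul_self_sqrt Real.pi_nonneg]

theorem image_one_sub_cos_div_two_Ioo :
    (fun θ => (1 - Real.cos θ) / 2) '' Ioo 0 π = Ioo 0 1 := by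
  have image_cos : Real.cos '' Ioo 0 π = Ioo (-1) 1 :=
    Real.cosPartialHomeomorph.image_source_eq_target
  simp only [div_eq_mul_inv]
  rw [← image_image (fun t => (1 - t) * 2⁻¹) Real.cos, image_cos,
    ← image_image (· * 2⁻¹) (fun t => (1 : ℝ) - t), image_const_sub_Ioo,
    image_mul_right_Ioo _ _ (by positivity)]
  norm_num

theorem sin_div_two_mul_one_sub_cos_div_two_rpow {θ : ℝ} (hθ : θ ∈ Ioo 0 π) :
    Real.sin θ / 2 * (((1 - Real.cos θ) / 2) ^ (3 / 2 - 1 : ℝ) *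
      (1 - (1 - Real.cos θ) / 2) ^ (1 / 2 - 1 : ℝ)) = (1 - Real.cos θ) / 2 := by
  have half_mem : θ / 2 ∈ Ioo 0 (π / 2) := ⟨half_pos hθ.1, by linarith [hθ.2]⟩
  have sin_pos : 0 < Real.sin (θ / 2) :=
    Real.sin_pos_of_pos_of_lt_pi half_mem.1 (by linarith [half_mem.2, Real.pi_pos])
  have cos_pos : 0 < Real.cos (θ / 2) :=
    Real.cos_pos_of_mem_Ioo ⟨by linarith [half_mem.1, Real.pi_pos], half_mem.2⟩
  have sin_eq : Real.sin θ / 2 = Real.sin (θ / 2) * Real.cos (θ / 2) := by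
    nth_rw 1 [← mul_div_cancel₀ θ two_ne_zero]
    rw [Real.sin_two_mul]
    ring
  have sin_sq : (1 - Real.cos θ) / 2 = Real.sin (θ / 2) ^ 2 := by
    rw [Real.sin_sq_eq_half_sub, mul_div_cancel₀ _ two_ne_zero]
    ring
  rw [sin_sq, ← Real.cos_sq', ← Real.rpow_natCast_mul sin_pos.le,
    ← Real.rpow_natCast_mul cos_pos.le, sin_eq]
  norm_num [Real.rpow_neg_one]
  field_simp

theorem betaMeasure_three_halves_one_half :
    betaMeasure (3 / 2) (1 / 2) =
      ((volume.restrict (Ioo 0 π)).withDensity fun θ =>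
        ENNReal.ofReal ((1 - Real.cos θ) / π)).map fun θ => (1 - Real.cos θ) / 2 := by
  refine Measure.ext_of_lintegral _ fun g hg => ?_
  rw [betaMeasure_eq_withDensity_restrict, beta_three_halves_one_half,
    lintegral_map hg (by fun_prop),
    lintegral_withDensity_eq_lintegral_mul _ (by fun_prop) (by fun_prop),
    lintegral_withDensity_eq_lintegral_mul _ (by fun_prop) (by fun_prop),
    ← image_one_sub_cos_div_two_Ioo,
    lintegral_image_eq_lintegral_abs_deriv_mul measurableSet_Ioo (f' := fun θ => Real.sin θ / 2)
      (fun θ _ => by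
        simpa using (((Real.hasDerivAt_cos θ).const_sub 1).div_const 2).hasDerivWithinAt)
      fun a ha b hb h => Real.injOn_cos (Ioo_subset_Icc_self ha) (Ioo_subset_Icc_self hb)
        (by linarith)]
  refine setLIntegral_congr_fun measurableSet_Ioo fun θ hθ => ?_
  simp only [Pi.mul_apply]
  have sin_pos := Real.sin_pos_of_mem_Ioo hθ
  rw [← mul_assoc, ← ENNReal.ofReal_mul (abs_nonneg _), abs_of_pos (half_pos sin_pos),
    mul_left_comm, sin_div_two_mul_one_sub_cos_div_two_rpow hθ]
  congr 2
  field_simp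

theorem integral_betaMeasure_one_one (f : ℝ → ℝ) :
    ∫ τ, f τ ∂betaMeasure 1 1 = ∫ τ in 0..1, f τ := by
  rw [betaMeasure_one_one, intervalIntegral.integral_of_le zero_le_one,
    integral_Ioc_eq_integral_Ioo]

theorem integral_betaMeasure_three_halves_one_half {f : ℝ → ℝ} (hf : Measurable f) :
    ∫ s, f s ∂betaMeasure (3 / 2) (1 / 2) =
      ∫ θ in 0..π, (1 - Real.cos θ) / π * f ((1 - Real.cos θ) / 2) := by
  rw [betaMeasure_three_halves_one_half, integral_map (by fun_prop) (by fun_prop),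
    integral_withDensity_eq_integral_toReal_smul (by fun_prop) (by simp),
    intervalIntegral.integral_of_le Real.pi_nonneg, integral_Ioc_eq_integral_Ioo]
  refine setIntegral_congr_fun measurableSet_Ioo fun θ _ => ?_
  have : 0 ≤ (1 - Real.cos θ) / π :=
    div_nonneg (sub_nonneg.2 (Real.cos_le_one θ)) Real.pi_nonneg
  simp [ENNReal.toReal_ofReal this]

theorem integrable_log_betaMeasure_one_one : Integrable Real.log (betaMeasure 1 1) := by
  rw [betaMeasure_one_one, ← IntegrableOn,
    ← intervalIntegrable_iff_integrableOn_Ioo_of_le zero_le_one]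
  exact intervalIntegral.intervalIntegrable_log'

theorem integrable_log_betaMeasure_three_halves_one_half :
    Integrable Real.log (betaMeasure (3 / 2) (1 / 2)) := by
  rw [betaMeasure_three_halves_one_half, integrable_map_measure (by fun_prop) (by fun_prop),
    integrable_withDensity_iff_integrable_smul₀' (by fun_prop) (by simp), ← IntegrableOn,
    ← intervalIntegrable_iff_integrableOn_Ioo_of_le Real.pi_nonneg]
  have : Continuous fun θ =>
      2 / π * ((1 - Real.cos θ) / 2 * Real.log ((1 - Real.cos θ) / 2)) :=
    continuous_const.mul (Real.continuous_mul_log.comp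
      (f := fun θ => (1 - Real.cos θ) / 2) (by fun_prop))
  refine (this.intervalIntegrable _ _).congr fun θ _ => ?_
  have : 0 ≤ (1 - Real.cos θ) / π :=
    div_nonneg (sub_nonneg.2 (Real.cos_le_one θ)) Real.pi_nonneg
  simp only [Function.comp_apply, smul_eq_mul, ENNReal.toReal_ofReal this]
  ring

theorem ae_mem_Ioo_betaMeasure (p q : ℝ) : ∀ᵐ τ ∂betaMeasure p q, τ ∈ Ioo 0 1 := by
  rw [betaMeasure_eq_withDensity_restrict]
  exact (withDensity_absolutelyContinuous _ _).ae_le (ae_restrict_mem measurableSet_Ioo)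

theorem integrable_log_add_mul_prod {μ ν : Measure ℝ} [IsFiniteMeasure μ] [IsFiniteMeasure ν]
    (hμ : ∀ᵐ s ∂μ, s ∈ Ioo 0 1) (hν : ∀ᵐ τ ∂ν, τ ∈ Ioo 0 1) (hμ_log : Integrable Real.log μ)
    (hν_log : Integrable Real.log ν) {b k : ℝ} (hb : 0 ≤ b) (hk : 0 < k) :
    Integrable (fun z => Real.log (b + k * z.1 * z.2)) (μ.prod ν) := by
  have lower : Integrable (fun z : ℝ × ℝ => Real.log k + Real.log z.1 + Real.log z.2) (μ.prod ν) :=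
    ((integrable_const _).add (hμ_log.comp_fst ν)).add (hν_log.comp_snd μ)
  have upper : Integrable (fun _ : ℝ × ℝ => Real.log (b + k)) (μ.prod ν) := integrable_const _
  refine (lower.abs.add upper.abs).mono' (Measurable.aestronglyMeasurable (by fun_prop)) ?_
  filter_upwards [Measure.quasiMeasurePreserving_fst.ae hμ,
    Measure.quasiMeasurePreserving_snd.ae hν] with z ⟨hs, hs'⟩ ⟨hτ, hτ'⟩
  have pos : 0 < k * z.1 * z.2 := by positivity
  have le : k * z.1 * z.2 ≤ k := by
    rw [mul_assoc]
    exact mul_le_of_le_one_right hk.le (mul_le_one₀ hs'.le hτ.le hτ'.le)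
  refine (abs_le_max_abs_abs ?_ ?_).trans (max_le_add_of_nonneg (abs_nonneg _) (abs_nonneg _))
  · rw [← Real.log_mul hk.ne' hs.ne', ← Real.log_mul (by positivity) hτ.ne']
    exact Real.log_le_log pos (by linarith)
  · exact Real.log_le_log (by linarith) (by linarith)

theorem mul_integral_log_add_mul (b k : ℝ) :
    k * ∫ τ in 0..1, Real.log (b + k * τ) =
      (b + k) * Real.log (b + k) - b * Real.log b - k := by
  rw [intervalIntegral.mul_integral_comp_add_mul, integral_log]
  simp; ring

/-! ### The entropy integral of `|1 - r e^{iθ}|²` -/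

section CircleIntegral

open scoped ComplexConjugate

theorem integral_comp_cos_zero_two_pi {f : ℝ → ℝ} (hf : Continuous f) :
    ∫ θ in 0..2 * π, f (Real.cos θ) = 2 * ∫ θ in 0..π, f (Real.cos θ) := by
  have integrable (a b : ℝ) : IntervalIntegrable (fun θ => f (Real.cos θ)) volume a b :=
    (hf.comp Real.continuous_cos).intervalIntegrable a b
  have reflect : ∫ θ in π..2 * π, f (Real.cos θ) =
      ∫ θ in 0..π, f (Real.cos θ) := by
    have := intervalIntegral.integral_comp_sub_left (a := 0) (b := π)
      (fun θ => f (Real.cos θ)) (2 * π)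
    simp only [Real.cos_two_pi_sub, sub_zero] at this
    rw [this]
    ring_nf
  rw [← intervalIntegral.integral_add_adjacent_intervals (integrable 0 π) (integrable _ _),
    reflect, two_mul]

theorem norm_one_sub_mul_circleMap_sq (r θ : ℝ) :
    ‖1 - r * circleMap 0 1 θ‖ ^ 2 = 1 + r ^ 2 - 2 * r * Real.cos θ := by
  rw [← Complex.normSq_eq_norm_sq, circleMap_zero, Complex.ofReal_one, one_mul,
    Complex.exp_mul_I, ← Complex.ofReal_cos, ← Complex.ofReal_sin, Complex.normSq_apply]
  simp only [Complex.sub_re, Complex.sub_im, Complex.one_re, Complex.one_im, Complex.re_ofReal_mul,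
    Complex.im_ofReal_mul, Complex.add_re, Complex.add_im, Complex.mul_I_re, Complex.mul_I_im,
    Complex.ofReal_re, Complex.ofReal_im]
  linear_combination r ^ 2 * Real.sin_sq_add_cos_sq θ

theorem circleAverage_norm_sq_mul_log_norm_one_sub_mul {w : ℂ} (hw : ‖w‖ < 1) :
    Real.circleAverage (fun z => ‖1 - w * z‖ ^ 2 * Real.log ‖1 - w * z‖) 0 1 = ‖w‖ ^ 2 := by
  set l : ℂ → ℂ := fun z => Complex.log (1 - w * z)
  -- On the unit circle `dslope l 0 z = l z / z = conj z * l z`, so `h z = ‖1 - w * z‖ ^ 2 * l z`.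
  set h : ℂ → ℂ := fun z => (1 - w * z) * (l z - conj w * dslope l 0 z)
  set U : Set ℂ := {z | ‖w * z‖ < 1}
  have hU : IsOpen U := isOpen_lt (by fun_prop) continuous_const
  have hl : DifferentiableOn ℂ l U := fun z hz => by
    have : 1 - w * z ∈ Complex.slitPlane := by
      simpa [sub_eq_add_neg] using
        Complex.mem_slitPlane_of_norm_lt_one (z := -(w * z)) (by rwa [norm_neg])
    fun_prop (disch := assumption)
  have hh : DifferentiableOn ℂ h U := by
    have : DifferentiableOn ℂ (dslope l 0) U :=
      (Complex.differentiableOn_dslope (hU.mem_nhds (by simp [U]))).2 hl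
    fun_prop
  have closedBall_subset : closedBall (0 : ℂ) |1| ⊆ U := fun z hz => by
    have hz : ‖z‖ ≤ 1 := by simpa using hz
    simpa [U] using (mul_le_of_le_one_right (norm_nonneg w) hz).trans_lt hw
  have h_zero : h 0 = (‖w‖ ^ 2 : ℝ) := by
    have : HasDerivAt l (-w) 0 := by
      simpa using (((hasDerivAt_id (0 : ℂ)).const_mul w).const_sub 1).clog (by simp)
    simp [h, l, this.deriv, Complex.conj_mul']
  have re_h : EqOn (fun z => ‖1 - w * z‖ ^ 2 * Real.log ‖1 - w * z‖) (fun z => (h z).re)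
      (sphere 0 |1|) := fun z hz => by
    have hz : ‖z‖ = 1 := by simpa using hz
    have dslope_eq : dslope l 0 z = l z * conj z := by
      rw [dslope_of_ne _ (norm_ne_zero_iff.1 (by simp [hz])), slope_def_field,
        ← Complex.inv_eq_conj hz]
      simp [l, div_eq_mul_inv]
    have : h z = (‖1 - w * z‖ ^ 2 : ℝ) * l z := by
      rw [Complex.ofReal_pow, ← Complex.mul_conj']
      simp only [h, dslope_eq, map_sub, map_one, map_mul]
      ring
    simp only [this, Complex.re_ofReal_mul, l, Complex.log_re]
  have harmonic : InnerProductSpace.HarmonicOnNhd (fun z => (h z).re) (closedBall 0 |1|) :=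
    fun z hz => (hh.analyticOnNhd hU z (closedBall_subset hz)).harmonicAt_re
  rw [Real.circleAverage_congr_sphere re_h, harmonic.circleAverage_eq, h_zero, Complex.ofReal_re]

theorem integral_mul_log_one_add_sq_sub_two_mul_cos {r : ℝ} (hr : |r| ≤ 1) :
    ∫ θ in 0..π, (1 + r ^ 2 - 2 * r * Real.cos θ) *
      Real.log (1 + r ^ 2 - 2 * r * Real.cos θ) = 2 * π * r ^ 2 := by
  have on_open : EqOn (fun r : ℝ => ∫ θ in 0..π, (1 + r ^ 2 - 2 * r * Real.cos θ) *
      Real.log (1 + r ^ 2 - 2 * r * Real.cos θ)) (fun r => 2 * π * r ^ 2) (Ioo (-1) 1) := by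
    intro r hr
    have average := circleAverage_norm_sq_mul_log_norm_one_sub_mul (w := r)
      (by simpa using abs_lt.2 hr)
    have log_norm (z : ℂ) : Real.log ‖z‖ = Real.log (‖z‖ ^ 2) / 2 := by
      rw [Real.log_pow]; push_cast; ring
    simp only [Real.circleAverage, log_norm, norm_one_sub_mul_circleMap_sq, smul_eq_mul]
      at average
    have halve := integral_comp_cos_zero_two_pi
      (f := fun t => (1 + r ^ 2 - 2 * r * t) * Real.log (1 + r ^ 2 - 2 * r * t))
      (Real.continuous_mul_log.comp (f := fun t => 1 + r ^ 2 - 2 * r * t) (by fun_prop))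
    simp only [← mul_div_assoc, intervalIntegral.integral_div, halve, Complex.norm_real,
      Real.norm_eq_abs, sq_abs] at average
    field_simp at average
    linarith
  have continuous : Continuous fun r : ℝ => ∫ θ in 0..π, (1 + r ^ 2 - 2 * r * Real.cos θ) *
      Real.log (1 + r ^ 2 - 2 * r * Real.cos θ) := by
    refine intervalIntegral.continuous_parametric_intervalIntegral_of_continuous' ?_ _ _
    exact Real.continuous_mul_log.comp
      (f := fun p : ℝ × ℝ => 1 + p.1 ^ 2 - 2 * p.1 * Real.cos p.2) (by fun_prop)
  refine on_open.closure continuous (by fun_prop) ?_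
  rw [closure_Ioo (by norm_num)]
  exact abs_le.1 hr

end CircleIntegral

/-! ### Mahler measures -/

theorem mahlerH2_commutator_add_eq_integral (c : ℝ) :
    mahlerH2 (fun x y => x * y - y * x + c) =
      (∫ z, Real.log (c ^ 2 + 4 * z.1 * z.2)
        ∂(betaMeasure (3 / 2) (1 / 2)).prod (betaMeasure 1 1)) / 2 := by
  have log_norm (x y : ℍ[ℝ]) :
      Real.log ‖x * y - y * x + c‖ = Real.log (c ^ 2 + ‖x * y - y * x‖ ^ 2) / 2 := by
    rw [← norm_sq_add_real_of_re_eq_zero c (by simp; ring), Real.log_pow]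
    push_cast
    ring
  have law := integral_map (μ := muH.prod muH) (φ := fun p => ‖(p.1 * p.2 - p.2 * p.1 : ℍ[ℝ])‖ ^ 2)
    (f := fun t => Real.log (c ^ 2 + t)) (by fun_prop)
    (Measurable.aestronglyMeasurable (by fun_prop))
  rw [map_norm_sq_commutator_muH_prod, integral_map (by fun_prop)
    (Measurable.aestronglyMeasurable (by fun_prop))] at law
  simp only [mahlerH2, log_norm, integral_div, law]

theorem mahlerH2_commutator_add_eq_integral_cos (c : ℝ) :
    mahlerH2 (fun x y => x * y - y * x + c) =
      (∫ θ in 0..π, (c ^ 2 + 2 - 2 * Real.cos θ) *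
        Real.log (c ^ 2 + 2 - 2 * Real.cos θ)) / (4 * π) -
        c ^ 2 * Real.log (c ^ 2) / 4 - 1 / 2 := by
  have integrable := integrable_log_add_mul_prod (ae_mem_Ioo_betaMeasure _ _)
    (ae_mem_Ioo_betaMeasure _ _) integrable_log_betaMeasure_three_halves_one_half
    integrable_log_betaMeasure_one_one (sq_nonneg c) zero_lt_four
  have measurable : Measurable fun s => ∫ τ, Real.log (c ^ 2 + 4 * s * τ) ∂betaMeasure 1 1 :=
    (StronglyMeasurable.integral_prod_right' (f := fun z : ℝ × ℝ =>
      Real.log (c ^ 2 + 4 * z.1 * z.2)) (by fun_prop)).measurable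
  have inner (θ : ℝ) : (1 - Real.cos θ) / π *
      ∫ τ in 0..1, Real.log (c ^ 2 + 4 * ((1 - Real.cos θ) / 2) * τ) =
      ((c ^ 2 + 2 - 2 * Real.cos θ) * Real.log (c ^ 2 + 2 - 2 * Real.cos θ) -
        c ^ 2 * Real.log (c ^ 2) - (2 - 2 * Real.cos θ)) / (2 * π) := by
    rw [show 4 * ((1 - Real.cos θ) / 2) = 2 - 2 * Real.cos θ by ring, add_sub_assoc,
      ← mul_integral_log_add_mul]
    field_simp
  have : Continuous fun θ =>
      (c ^ 2 + 2 - 2 * Real.cos θ) * Real.log (c ^ 2 + 2 - 2 * Real.cos θ) :=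
    Real.continuous_mul_log.comp (f := fun θ => c ^ 2 + 2 - 2 * Real.cos θ) (by fun_prop)
  rw [mahlerH2_commutator_add_eq_integral, integral_prod _ integrable,
    integral_betaMeasure_three_halves_one_half measurable]
  simp only [integral_betaMeasure_one_one, inner]
  rw [intervalIntegral.integral_div, intervalIntegral.integral_sub, intervalIntegral.integral_sub,
    intervalIntegral.integral_sub]
  · simp only [intervalIntegral.integral_const, intervalIntegral.integral_const_mul, integral_cos,
      Real.sin_pi, Real.sin_zero, smul_eq_mul]
    field_simp
    ring
  all_goals exact Continuous.intervalIntegrable (by fun_prop) _ _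

theorem integral_mul_log_add_inv_sub_two_mul_cos {r : ℝ} (hr : 0 < r) (hr1 : r ≤ 1) :
    ∫ θ in 0..π, (r + r⁻¹ - 2 * Real.cos θ) * Real.log (r + r⁻¹ - 2 * Real.cos θ) =
      π * (2 * r - (r + r⁻¹) * Real.log r) := by
  set B : ℝ → ℝ := fun θ => 1 + r ^ 2 - 2 * r * Real.cos θ
  have hB : Continuous B := by fun_prop
  have hB_log : Continuous fun θ => B θ * Real.log (B θ) := Real.continuous_mul_log.comp hB
  have scale (θ : ℝ) : (r + r⁻¹ - 2 * Real.cos θ) * Real.log (r + r⁻¹ - 2 * Real.cos θ) =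
      (B θ * Real.log (B θ) - B θ * Real.log r) / r := by
    have : r + r⁻¹ - 2 * Real.cos θ = B θ / r := by
      simp only [B]
      field_simp
      ring
    rw [this]
    rcases eq_or_ne (B θ) 0 with h | h
    · simp [h]
    · rw [Real.log_div h hr.ne']
      ring
  have integral_B : ∫ θ in 0..π, B θ = π * (1 + r ^ 2) := by
    rw [intervalIntegral.integral_sub intervalIntegrable_const
      (Continuous.intervalIntegrable (by fun_prop) _ _)]
    simp [mul_add]
  simp only [scale]
  rw [intervalIntegral.integral_div, intervalIntegral.integral_sub
    (hB_log.intervalIntegrable _ _)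
    ((hB.mul_const _).intervalIntegrable _ _), intervalIntegral.integral_mul_const, integral_B,
    integral_mul_log_one_add_sq_sub_two_mul_cos (abs_le.2 ⟨by linarith, hr1⟩)]
  field_simp
  ring

theorem mahlerH2_commutators_general (c : ℝ) :
    mahlerH2 (fun x y => x * y - y * x + c) =
      (c ^ 2 - |c| * √(c ^ 2 + 4) +
        (c ^ 2 + 2) * Real.log ((c ^ 2 + 2 + |c| * √(c ^ 2 + 4)) / 2) -
        c ^ 2 * Real.log (c ^ 2)) / 4 := by
  set d := |c| * √(c ^ 2 + 4)
  have hd_sq : d ^ 2 = c ^ 2 * (c ^ 2 + 4) := by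
    rw [mul_pow, sq_abs, Real.sq_sqrt (by positivity)]
  set R := (c ^ 2 + 2 + d) / 2
  have hR : 1 ≤ R := by
    have hd : 0 ≤ d := by positivity
    simp only [R]
    linarith [sq_nonneg c]
  have R_inv : R⁻¹ = (c ^ 2 + 2 - d) / 2 := by
    refine inv_eq_of_mul_eq_one_right ?_
    simp only [R]
    linear_combination -hd_sq / 4
  have sum_eq : c ^ 2 + 2 = R⁻¹ + R⁻¹⁻¹ := by
    rw [inv_inv, R_inv]
    simp only [R]
    ring
  have key := integral_mul_log_add_inv_sub_two_mul_cos (inv_pos.2 (one_pos.trans_le hR))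
    (inv_le_one_of_one_le₀ hR)
  rw [← sum_eq, Real.log_inv] at key
  rw [mahlerH2_commutator_add_eq_integral_cos, key, R_inv]
  field_simp
  ring

/-- the two-variable quaternionic Mahler measures of the commutator
polynomials `xy - yx` and `xy - yx + 1`. -/
theorem mahlerH2_commutators :
    mahlerH2 (fun x y => x * y - y * x) = 0 ∧
    mahlerH2 (fun x y => x * y - y * x + 1) =
      (1 / 4) * (1 - Real.sqrt 5 + 3 * Real.log ((3 + Real.sqrt 5) / 2)) := by
  constructor
  · simpa using mahlerH2_commutators_general 0
  · have := mahlerH2_commutators_general 1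
    norm_num at this
    rw [this]
    ring
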